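/- arXiv:1812.07232 — 9 statements merged into one kernel-verified Lean document; each statement's English description precedes it below -/
import Mathlib

section
/- For every s ∈ ℝ with s ≠ 0, one has |f(s)|/2 ≤ f'(s)·|s| < |f(s)|. -/
/-- Lemma 2.1(v), first part: `|f(s)|/2 ≤ f'(s)|s| < |f(s)|` for `s ≠ 0`. -/
theorem f_deriv_estimates (ϑ f : ℝ → ℝ)
    (hϑC1 : ContDiff ℝ 1 ϑ) (hϑeven : ∀ s, ϑ (-s) = ϑ s) (hϑ1 : ∀ s, 1 ≤ ϑ s)
    (hϑ1' : StrictAntiOn ϑ (Set.Iio 0)) (hϑ1'' : StrictMonoOn ϑ (Set.Ioi 0))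
    (hϑ2 : MonotoneOn (fun s => ϑ s / s ^ 2) (Set.Iio 0))
    (hϑ2' : AntitoneOn (fun s => ϑ s / s ^ 2) (Set.Ioi 0))
    (hfodd : ∀ s, f (-s) = - f s) (hfC2 : ContDiff ℝ 2 f) (hf0 : f 0 = 0)
    (hf' : ∀ s, HasDerivAt f ((Real.sqrt (ϑ (f s)))⁻¹) s) :
    ∀ s : ℝ, s ≠ 0 → |f s| / 2 ≤ deriv f s * |s| ∧ deriv f s * |s| < |f s| := by 
  have hqpos : ∀ x, 0 < Real.sqrt (ϑ x) := fun x =>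
    Real.sqrt_pos.2 (lt_of_lt_of_le one_pos (hϑ1 x))
  have hmono : StrictMono f := strictMono_of_deriv_pos fun x => by
    rw [(hf' x).deriv]; exact inv_pos.2 (hqpos _)
  have hcont : Continuous f := hfC2.continuous
  have key : ∀ s : ℝ, 0 < s → f s / 2 ≤ (Real.sqrt (ϑ (f s)))⁻¹ * s ∧
      (Real.sqrt (ϑ (f s)))⁻¹ * s < f s := by
    intro s hs
    have hfs : 0 < f s := by have := hmono hs; rwa [hf0] at this
    constructor
    · obtain ⟨c, ⟨hc0, hcs⟩, hc⟩ := exists_hasDerivAt_eq_slope (fun u => f u ^ 2)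
        (fun u => 2 * f u * (Real.sqrt (ϑ (f u)))⁻¹) hs (by fun_prop)
        (fun x _ => by simpa using (hf' x).fun_pow 2)
      have hfc : 0 < f c := by have := hmono hc0; rwa [hf0] at this
      have hlt : f c < f s := hmono hcs
      have h1 := hϑ2' (Set.mem_Ioi.2 hfc) (Set.mem_Ioi.2 hfs) hlt.le
      simp only at h1
      rw [div_le_div_iff₀ (by positivity) (by positivity)] at h1
      have h2 : f c * Real.sqrt (ϑ (f s)) ≤ f s * Real.sqrt (ϑ (f c)) := by
        refine (pow_le_pow_iff_left₀ (mul_pos hfc (hqpos _)).le (mul_pos hfs (hqpos _)).le two_ne_zero).1 ?_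
        rw [mul_pow, mul_pow, Real.sq_sqrt (by linarith [hϑ1 (f s)]),
          Real.sq_sqrt (by linarith [hϑ1 (f c)])]
        linarith
      have h3 : f c * (Real.sqrt (ϑ (f c)))⁻¹ ≤ f s * (Real.sqrt (ϑ (f s)))⁻¹ := by
        rw [← div_eq_mul_inv, ← div_eq_mul_inv, div_le_div_iff₀ (hqpos _) (hqpos _)]
        exact h2
      simp only [hf0] at hc
      rw [eq_div_iff (by linarith)] at hc
      have h4 := mul_le_mul_of_nonneg_right h3 hs.le
      have h5 : f s * (f s / 2) ≤ f s * ((Real.sqrt (ϑ (f s)))⁻¹ * s) := by nlinarith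
      exact le_of_mul_le_mul_left h5 hfs
    · obtain ⟨c, ⟨hc0, hcs⟩, hc⟩ := exists_hasDerivAt_eq_slope f
        (fun u => (Real.sqrt (ϑ (f u)))⁻¹) hs hcont.continuousOn (fun x _ => hf' x)
      have hfc : 0 < f c := by have := hmono hc0; rwa [hf0] at this
      have hlt := hϑ1'' (Set.mem_Ioi.2 hfc) (Set.mem_Ioi.2 hfs) (hmono hcs)
      have h1 : (Real.sqrt (ϑ (f s)))⁻¹ < (Real.sqrt (ϑ (f c)))⁻¹ :=
        inv_strictAnti₀ (hqpos _) (Real.sqrt_lt_sqrt (by linarith [hϑ1 (f c)]) hlt)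
      rw [eq_div_iff (by linarith), hf0] at hc
      have := mul_lt_mul_of_pos_right h1 hs
      linarith
  intro s hs
  rw [(hf' s).deriv]
  rcases lt_or_gt_of_ne hs with h | h
  · have hk := key (-s) (by linarith)
    have hfs : f s < 0 := by have := hmono h; rwa [hf0] at this
    rw [hfodd, hϑeven] at hk
    rwa [abs_of_neg h, abs_of_neg hfs]
  · have hfs : 0 < f s := by have := hmono h; rwa [hf0] at this
    rw [abs_of_pos h, abs_of_pos hfs]
    exact key s h
end

section
/- The map s ↦ |f(s)|/√|s| is nonincreasing on (−∞, 0) and nondecreasing on (0, ∞). -/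
/-- Lemma 2.1(v), second part: `s ↦ |f(s)|/√|s|` is nonincreasing on `(-∞,0)`
and nondecreasing on `(0,∞)`. -/
theorem f_sqrt_monotonicity (ϑ f : ℝ → ℝ)
    (hϑC1 : ContDiff ℝ 1 ϑ) (hϑeven : ∀ s, ϑ (-s) = ϑ s) (hϑ1 : ∀ s, 1 ≤ ϑ s)
    (hϑ1' : StrictAntiOn ϑ (Set.Iio 0)) (hϑ1'' : StrictMonoOn ϑ (Set.Ioi 0))
    (hϑ2 : MonotoneOn (fun s => ϑ s / s ^ 2) (Set.Iio 0))
    (hϑ2' : AntitoneOn (fun s => ϑ s / s ^ 2) (Set.Ioi 0))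
    (hfodd : ∀ s, f (-s) = - f s) (hfC2 : ContDiff ℝ 2 f) (hf0 : f 0 = 0)
    (hf' : ∀ s, HasDerivAt f ((Real.sqrt (ϑ (f s)))⁻¹) s) :
    AntitoneOn (fun s => |f s| / Real.sqrt |s|) (Set.Iio 0) ∧
    MonotoneOn (fun s => |f s| / Real.sqrt |s|) (Set.Ioi 0) := by
  have hpos : ∀ s, 0 < Real.sqrt (ϑ s) := fun s =>
    Real.sqrt_pos.2 (lt_of_lt_of_le one_pos (hϑ1 s))
  have hmono : StrictMono f := by
    apply strictMono_of_deriv_pos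
    intro x
    rw [(hf' x).deriv]
    exact inv_pos.2 (hpos _)
  have hfpos : ∀ s, 0 < s → 0 < f s := fun s hs => by
    have := hmono hs
    rwa [hf0] at this
  -- the map t / √ϑ(t) is nondecreasing on (0, ∞)
  have hq : ∀ a b, 0 < a → a ≤ b → a * (Real.sqrt (ϑ a))⁻¹ ≤ b * (Real.sqrt (ϑ b))⁻¹ := by
    intro a b ha hab
    have hb : 0 < b := lt_of_lt_of_le ha hab
    have h := hϑ2' (Set.mem_Ioi.2 ha) (Set.mem_Ioi.2 hb) hab
    simp only at h
    rw [div_le_div_iff₀ (by positivity) (by positivity)] at h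
    rw [← div_eq_mul_inv, ← div_eq_mul_inv, div_le_div_iff₀ (hpos a) (hpos b)]
    refine le_of_sq_le_sq ?_ (mul_nonneg hb.le (hpos a).le)
    rw [mul_pow, mul_pow, Real.sq_sqrt (by linarith [hϑ1 a, hϑ1 b]), Real.sq_sqrt (by linarith [hϑ1 a, hϑ1 b])]
    linarith
  have hd : ∀ s, HasDerivAt (fun s => f s ^ 2) (2 * (f s * (Real.sqrt (ϑ (f s)))⁻¹)) s := by
    intro s
    have := (hf' s).pow 2
    refine this.congr_deriv ?_
    push_cast
    ring
  have hconv : ConvexOn ℝ (Set.Ici 0) (fun s => f s ^ 2) := by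
    apply MonotoneOn.convexOn_of_deriv (convex_Ici 0)
    · exact fun s _ => (hd s).continuousAt.continuousWithinAt
    · exact fun s _ => (hd s).differentiableAt.differentiableWithinAt
    · rw [interior_Ici]
      intro x hx y hy hxy
      rw [(hd x).deriv, (hd y).deriv]
      have := hq (f x) (f y) (hfpos x hx) (hmono.monotone hxy)
      linarith
  have key : ∀ x y, 0 < x → x ≤ y → f x / Real.sqrt x ≤ f y / Real.sqrt y := by
    intro x y hx hxy
    have hy : 0 < y := lt_of_lt_of_le hx hxy
    have h := hconv.2 (Set.mem_Ici.2 hy.le) (Set.mem_Ici.2 le_rfl)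
      (show 0 ≤ x / y by positivity) (show 0 ≤ 1 - x / y by
        rw [sub_nonneg, div_le_one hy]; exact hxy) (by ring)
    simp only [smul_eq_mul, mul_zero, add_zero, hf0] at h
    rw [div_mul_cancel₀ _ hy.ne', div_mul_eq_mul_div] at h
    norm_num at h
    rw [le_div_iff₀ hy] at h
    rw [div_le_div_iff₀ (Real.sqrt_pos.2 hx) (Real.sqrt_pos.2 hy)]
    refine le_of_sq_le_sq ?_ (mul_nonneg (hfpos y hy).le (Real.sqrt_nonneg _))
    rw [mul_pow, mul_pow, Real.sq_sqrt hx.le, Real.sq_sqrt hy.le]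
    linarith
  constructor
  · intro x hx y hy hxy
    have hx0 : x < 0 := hx
    have hy0 : y < 0 := hy
    have h := key (-y) (-x) (by linarith) (by linarith)
    have h1 := hfpos (-x) (by linarith)
    have h2 := hfpos (-y) (by linarith)
    simp only
    rw [abs_of_neg hx0, abs_of_neg hy0, ← abs_neg (f x), ← abs_neg (f y), ← hfodd, ← hfodd,
      abs_of_pos h1, abs_of_pos h2]
    exact h
  · intro x hx y hy hxy
    have hx0 : 0 < x := hx
    have hy0 : 0 < y := hy
    simp only
    rw [abs_of_pos hx0, abs_of_pos hy0, abs_of_pos (hfpos x hx0), abs_of_pos (hfpos y hy0)]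
    exact key x y hx0 hxy
end

section
/- The limit lim_{|s|→∞} |f(s)|/√|s| exists and equals (8/α²)^{1/4}. -/
open Filter Topology in
lemma aux_div_tendsto (g g' : ℝ → ℝ) (L : ℝ) (hg : ∀ s, HasDerivAt g (g' s) s)
    (hL : Tendsto g' atTop (𝓝 L)) : Tendsto (fun s => g s / s) atTop (𝓝 L) := by
  rw [Metric.tendsto_atTop] at hL ⊢
  intro ε hε
  obtain ⟨S, hS⟩ := hL (ε / 3) (by positivity)
  set T := max S 1 with hT
  have hT1 : 1 ≤ T := le_max_right _ _
  have key : ∀ s, T ≤ s → |(g s - L * s) - (g T - L * T)| ≤ ε / 3 * (s - T) := by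
    intro s hs
    have := (convex_Ici T).norm_image_sub_le_of_norm_hasDerivWithin_le
      (f := fun s => g s - L * s) (f' := fun s => g' s - L * 1) (C := ε / 3) (x := T) (y := s)
      (fun x _ => ((hg x).sub ((hasDerivAt_id x).const_mul L)).hasDerivWithinAt)
      (fun x hx => by
        have := hS x (le_trans (le_max_left _ _) hx)
        rw [Real.dist_eq] at this
        rw [Real.norm_eq_abs, mul_one]; exact this.le)
      (Set.mem_Ici.2 le_rfl) hs
    rw [Real.norm_eq_abs, Real.norm_eq_abs, abs_of_nonneg (sub_nonneg.2 hs)] at this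
    exact this
  refine ⟨max T (3 * |g T - L * T| / ε), fun s hs => ?_⟩
  have h1 : T ≤ s := le_trans (le_max_left _ _) hs
  have h2 : 3 * |g T - L * T| / ε ≤ s := le_trans (le_max_right _ _) hs
  have hs0 : 0 < s := by linarith
  rw [div_le_iff₀ hε] at h2
  have h3 := key s h1
  have h4 : |g s - L * s| ≤ |(g s - L * s) - (g T - L * T)| + |g T - L * T| := by
    have := abs_add_le ((g s - L * s) - (g T - L * T)) (g T - L * T)
    simpa using this
  rw [Real.dist_eq, show g s / s - L = (g s - L * s) / s by field_simp, abs_div,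
    abs_of_pos hs0, div_lt_iff₀ hs0]
  nlinarith [mul_pos hε hs0]

/-- Lemma 2.1(vi), first part: `lim_{|s|→∞} |f(s)|/√|s| = (8/α²)^{1/4}`. -/
theorem f_sqrt_limit_at_infinity (ϑ f : ℝ → ℝ) (α : ℝ) (hα : 0 < α)
    (hϑC1 : ContDiff ℝ 1 ϑ) (hϑeven : ∀ s, ϑ (-s) = ϑ s) (hϑ1 : ∀ s, 1 ≤ ϑ s)
    (hϑ1' : StrictAntiOn ϑ (Set.Iio 0)) (hϑ1'' : StrictMonoOn ϑ (Set.Ioi 0))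
    (hϑ2 : MonotoneOn (fun s => ϑ s / s ^ 2) (Set.Iio 0))
    (hϑ2' : AntitoneOn (fun s => ϑ s / s ^ 2) (Set.Ioi 0))
    (hϑ3 : Filter.Tendsto (fun s => ϑ s / s ^ 2) (Filter.cocompact ℝ) (nhds (α ^ 2 / 2)))
    (hfodd : ∀ s, f (-s) = - f s) (hfC2 : ContDiff ℝ 2 f) (hf0 : f 0 = 0)
    (hf' : ∀ s, HasDerivAt f ((Real.sqrt (ϑ (f s)))⁻¹) s) :
    Filter.Tendsto (fun s => |f s| / Real.sqrt |s|) (Filter.cocompact ℝ)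
      (nhds ((8 / α ^ 2) ^ ((1:ℝ)/4))) := by
  have hpos : ∀ t, 0 < Real.sqrt (ϑ t) := fun t =>
    Real.sqrt_pos.2 (lt_of_lt_of_le one_pos (hϑ1 t))
  have hmono : StrictMono f := strictMono_of_hasDerivAt_pos hf' (fun s => inv_pos.2 (hpos _))
  have hg : ∀ s, HasDerivAt (fun s => f s ^ 2) (2 * (f s / Real.sqrt (ϑ (f s)))) s := by
    intro s
    have h := (hf' s).fun_pow 2
    refine h.congr_deriv ?_
    simp [div_eq_mul_inv, mul_assoc]
  have ha : 0 < f 1 := by rw [← hf0]; exact hmono one_pos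
  have hfpos : ∀ s, 0 < s → 0 < f s := fun s hs => by rw [← hf0]; exact hmono hs
  -- f / sqrt(ϑ f) as an inverse square root
  have hrew : ∀ t, 0 < t → t / Real.sqrt (ϑ t) = (Real.sqrt (ϑ t / t ^ 2))⁻¹ := by
    intro t ht
    rw [Real.sqrt_div' _ (sq_nonneg t), Real.sqrt_sq ht.le, inv_div]
  -- lower bound of the derivative
  set C := ϑ (f 1) / f 1 ^ 2 with hC
  have hCpos : 0 < C := div_pos (lt_of_lt_of_le one_pos (hϑ1 _)) (by positivity)
  set c := 2 * (Real.sqrt C)⁻¹ with hc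
  have hcpos : 0 < c := by have := Real.sqrt_pos.2 hCpos; positivity
  have hder : ∀ s, 1 ≤ s → c ≤ 2 * (f s / Real.sqrt (ϑ (f s))) := by
    intro s hs
    have hfs : f 1 ≤ f s := hmono.monotone hs
    have hfs0 : 0 < f s := hfpos s (by linarith)
    rw [hrew _ hfs0, hc]
    have h1 : ϑ (f s) / f s ^ 2 ≤ C := hϑ2' ha hfs0 hfs
    have h2 : 0 < ϑ (f s) / f s ^ 2 := div_pos (lt_of_lt_of_le one_pos (hϑ1 _)) (by positivity)
    have h3 := Real.sqrt_pos.2 h2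
    gcongr
  have hgrow : ∀ s, 1 ≤ s → c * (s - 1) ≤ f s ^ 2 := by
    intro s hs
    have hm : MonotoneOn (fun s => f s ^ 2 - c * s) (Set.Ici 1) := by
      refine monotoneOn_of_hasDerivWithinAt_nonneg (convex_Ici 1)
        (f' := fun s => 2 * (f s / Real.sqrt (ϑ (f s))) - c * 1) ?_ ?_ ?_
      · exact fun x _ =>
          ((hg x).sub ((hasDerivAt_id x).const_mul c)).continuousAt.continuousWithinAt
      · exact fun x _ => ((hg x).sub ((hasDerivAt_id x).const_mul c)).hasDerivWithinAt
      · intro x hx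
        rw [interior_Ici] at hx
        have := hder x (le_of_lt hx)
        linarith
    have := hm (Set.mem_Ici.2 le_rfl) (Set.mem_Ici.2 hs) hs
    simp only at this
    nlinarith [sq_nonneg (f 1)]
  have hftop : Filter.Tendsto f Filter.atTop Filter.atTop := by
    refine Filter.tendsto_atTop.2 fun b => ?_
    filter_upwards [Filter.eventually_ge_atTop (1 + b ^ 2 / c), Filter.eventually_ge_atTop 1]
      with s hs hs1
    have h1 := hgrow s hs1
    have h2 : b ^ 2 ≤ c * (s - 1) := by
      have : b ^ 2 / c ≤ s - 1 := by linarith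
      rw [div_le_iff₀ hcpos] at this
      linarith
    exact (abs_le_of_sq_le_sq' (h2.trans h1) (hfpos s (by linarith)).le).2
  have hϑtop : Filter.Tendsto (fun s => ϑ s / s ^ 2) Filter.atTop (nhds (α ^ 2 / 2)) :=
    hϑ3.mono_left (by rw [cocompact_eq_atBot_atTop]; exact le_sup_right)
  have hlim : Filter.Tendsto (fun s => 2 * (f s / Real.sqrt (ϑ (f s)))) Filter.atTop
      (nhds (2 * (Real.sqrt (α ^ 2 / 2))⁻¹)) := by
    have h1 := (((hϑtop.comp hftop).sqrt).inv₀
      (Real.sqrt_pos.2 (by positivity : 0 < α ^ 2 / 2)).ne').const_mul 2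
    refine h1.congr' ?_
    filter_upwards [Filter.eventually_gt_atTop 0] with s hs
    rw [hrew _ (hfpos s hs)]
    rfl
  have hquot := (aux_div_tendsto _ _ _ hg hlim).sqrt
  have hval : Real.sqrt (2 * (Real.sqrt (α ^ 2 / 2))⁻¹) = (8 / α ^ 2) ^ ((1:ℝ)/4) := by
    have e : 2 * (Real.sqrt (α ^ 2 / 2))⁻¹ = Real.sqrt (8 / α ^ 2) := by
      rw [← Real.sqrt_inv]
      nth_rewrite 1 [show (2:ℝ) = Real.sqrt (2 ^ 2) by rw [Real.sqrt_sq]; norm_num]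
      rw [← Real.sqrt_mul (by norm_num)]
      congr 1
      field_simp
      norm_num
    rw [e, Real.sqrt_eq_rpow, Real.sqrt_eq_rpow, ← Real.rpow_mul (by positivity)]
    norm_num
  rw [hval] at hquot
  have htop : Filter.Tendsto (fun s => |f s| / Real.sqrt |s|) Filter.atTop
      (nhds ((8 / α ^ 2) ^ ((1:ℝ)/4))) := by
    refine hquot.congr' ?_
    filter_upwards [Filter.eventually_gt_atTop 0] with s hs
    rw [Real.sqrt_div (sq_nonneg _), Real.sqrt_sq_eq_abs, abs_of_pos hs]
  rw [cocompact_eq_atBot_atTop]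
  refine Filter.Tendsto.sup ?_ htop
  refine (htop.comp Filter.tendsto_neg_atBot_atTop).congr fun s => ?_
  simp [hfodd]
end

section
/- The limit lim_{|s|→∞} f(s)/s exists and equals 0. -/
/-- Lemma 2.1(vi), second part: `lim_{|s|→∞} f(s)/s = 0`. -/
theorem f_over_s_limit_at_infinity (ϑ f : ℝ → ℝ) (α : ℝ) (hα : 0 < α)
    (hϑC1 : ContDiff ℝ 1 ϑ) (hϑeven : ∀ s, ϑ (-s) = ϑ s) (hϑ1 : ∀ s, 1 ≤ ϑ s)
    (hϑ1' : StrictAntiOn ϑ (Set.Iio 0)) (hϑ1'' : StrictMonoOn ϑ (Set.Ioi 0))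
    (hϑ2 : MonotoneOn (fun s => ϑ s / s ^ 2) (Set.Iio 0))
    (hϑ2' : AntitoneOn (fun s => ϑ s / s ^ 2) (Set.Ioi 0))
    (hϑ3 : Filter.Tendsto (fun s => ϑ s / s ^ 2) (Filter.cocompact ℝ) (nhds (α ^ 2 / 2)))
    (hfodd : ∀ s, f (-s) = - f s) (hfC2 : ContDiff ℝ 2 f) (hf0 : f 0 = 0)
    (hf' : ∀ s, HasDerivAt f ((Real.sqrt (ϑ (f s)))⁻¹) s) :
    Filter.Tendsto (fun s => f s / s) (Filter.cocompact ℝ) (nhds 0) := by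
  obtain ⟨a, ha, ha2⟩ : ∃ a : ℝ, 0 < a ∧ a ^ 2 = α ^ 2 / 2 :=
    ⟨Real.sqrt (α ^ 2 / 2), by positivity, Real.sq_sqrt (by positivity)⟩
  have hpos : ∀ t, 0 < t → a ^ 2 * t ^ 2 ≤ ϑ t := by
    intro t ht
    have h1 : Filter.Tendsto (fun s => ϑ s / s ^ 2) Filter.atTop (nhds (α ^ 2 / 2)) :=
      hϑ3.mono_left atTop_le_cocompact
    have h2 : α ^ 2 / 2 ≤ ϑ t / t ^ 2 := by
      refine le_of_tendsto h1 ?_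
      filter_upwards [Filter.eventually_ge_atTop t] with s hs
      exact hϑ2' (Set.mem_Ioi.2 ht) (Set.mem_Ioi.2 (lt_of_lt_of_le ht hs)) hs
    rw [le_div_iff₀ (by positivity)] at h2
    rw [ha2]; exact h2
  have hall : ∀ t, a ^ 2 * t ^ 2 ≤ ϑ t := by
    intro t
    rcases lt_trichotomy t 0 with h | h | h
    · have := hpos (-t) (by linarith)
      rw [hϑeven, neg_sq] at this
      exact this
    · subst h
      have := hϑ1 0
      norm_num
      linarith
    · exact hpos t h
  have hq : ∀ t, a * (t * (Real.sqrt (ϑ t))⁻¹) ≤ 1 := by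
    intro t
    have h1 : |a * t| ≤ Real.sqrt (ϑ t) := Real.abs_le_sqrt (by rw [mul_pow]; exact hall t)
    have h2 : 0 < Real.sqrt (ϑ t) := Real.sqrt_pos.2 (by linarith [hϑ1 t])
    rw [← mul_assoc, ← div_eq_mul_inv, div_le_one h2]
    exact (le_abs_self _).trans h1
  have hd : ∀ s, HasDerivAt (fun s => 2 * s - a * (f s) ^ 2)
      (2 - 2 * (a * (f s * (Real.sqrt (ϑ (f s)))⁻¹))) s := by
    intro s
    have := ((hasDerivAt_id s).const_mul 2).sub (((hf' s).pow 2).const_mul a)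
    refine HasDerivAt.congr_deriv (f := fun s => 2 * s - a * (f s) ^ 2) this ?_
    norm_num
    ring
  have hmono : Monotone (fun s => 2 * s - a * (f s) ^ 2) := by
    refine monotone_of_deriv_nonneg (fun s => (hd s).differentiableAt) (fun s => ?_)
    rw [(hd s).deriv]
    linarith [hq (f s)]
  have hb0 : ∀ s, 0 ≤ s → a * (f s) ^ 2 ≤ 2 * s := by
    intro s hs
    have := hmono hs
    simp [hf0] at this
    linarith
  have hb : ∀ s, a * (f s) ^ 2 ≤ 2 * |s| := by
    intro s
    rcases abs_cases s with ⟨h, h'⟩ | ⟨h, h'⟩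
    · rw [h]; exact hb0 s h'
    · have := hb0 (-s) (by linarith)
      rw [hfodd, neg_sq] at this
      rw [h]; exact this
  have hlim : Filter.Tendsto (fun s : ℝ => Real.sqrt (2 / a * ‖s‖⁻¹)) (Filter.cocompact ℝ)
      (nhds 0) := by
    have h1 := (tendsto_inv_atTop_zero.comp (tendsto_norm_cocompact_atTop (E := ℝ))).const_mul (2 / a)
    have h2 := h1.sqrt
    simpa using h2
  refine squeeze_zero_norm (fun s => ?_) hlim
  rw [Real.norm_eq_abs, Real.norm_eq_abs]
  apply Real.abs_le_sqrt
  rcases eq_or_ne s 0 with h | h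
  · simp [h]
  · have h1 : 0 < |s| := abs_pos.2 h
    have h2 := hb s
    rw [div_pow, ← sq_abs s, ← div_eq_mul_inv, div_div, div_le_div_iff₀ (by positivity) (by positivity)]
    nlinarith
end

section
/- For all s ∈ ℝ, |f(s)| ≤ (8/α²)^{1/4} · |s|^{1/2}. -/
/-- `|f(s)| ≤ (8/α²)^{1/4}·|s|^{1/2}` for all `s ∈ ℝ`. -/
theorem f_global_sqrt_bound (ϑ f : ℝ → ℝ) (α : ℝ) (hα : 0 < α)
    (hϑC1 : ContDiff ℝ 1 ϑ) (hϑeven : ∀ s, ϑ (-s) = ϑ s) (hϑ1 : ∀ s, 1 ≤ ϑ s)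
    (hϑ1' : StrictAntiOn ϑ (Set.Iio 0)) (hϑ1'' : StrictMonoOn ϑ (Set.Ioi 0))
    (hϑ2 : MonotoneOn (fun s => ϑ s / s ^ 2) (Set.Iio 0))
    (hϑ2' : AntitoneOn (fun s => ϑ s / s ^ 2) (Set.Ioi 0))
    (hϑ3 : Filter.Tendsto (fun s => ϑ s / s ^ 2) (Filter.cocompact ℝ) (nhds (α ^ 2 / 2)))
    (hfodd : ∀ s, f (-s) = - f s) (hfC2 : ContDiff ℝ 2 f) (hf0 : f 0 = 0)
    (hf' : ∀ s, HasDerivAt f ((Real.sqrt (ϑ (f s)))⁻¹) s) :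
    ∀ s : ℝ, |f s| ≤ (8 / α ^ 2) ^ ((1:ℝ)/4) * |s| ^ ((1:ℝ)/2) := by
  have hlow : ∀ t : ℝ, 0 < t → α ^ 2 / 2 * t ^ 2 ≤ ϑ t := by
    intro t ht
    have h1 : Filter.Tendsto (fun s => ϑ s / s ^ 2) Filter.atTop (nhds (α ^ 2 / 2)) :=
      hϑ3.mono_left atTop_le_cocompact
    have h2 : α ^ 2 / 2 ≤ ϑ t / t ^ 2 := by
      refine le_of_tendsto h1 ?_
      filter_upwards [Filter.eventually_ge_atTop t] with s hs
      exact hϑ2' (Set.mem_Ioi.2 ht) (Set.mem_Ioi.2 (lt_of_lt_of_le ht hs)) hs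
    rwa [le_div_iff₀ (by positivity)] at h2
  set c : ℝ := Real.sqrt (8 / α ^ 2) with hc
  have hc0 : 0 ≤ c := Real.sqrt_nonneg _
  have hcsq : c ^ 2 * α ^ 2 = 8 := by
    rw [hc, Real.sq_sqrt (by positivity)]
    field_simp
  have hder : ∀ s, 2 * f s * (Real.sqrt (ϑ (f s)))⁻¹ ≤ c := by
    intro s
    have hpos : 0 < Real.sqrt (ϑ (f s)) := Real.sqrt_pos.2 (by linarith [hϑ1 (f s)])
    rw [← div_eq_mul_inv, div_le_iff₀ hpos]
    rcases le_or_gt (f s) 0 with h | h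
    · have := mul_nonneg hc0 hpos.le
      linarith
    · refine (pow_le_pow_iff_left₀ (by positivity) (by positivity) two_ne_zero).1 ?_
      have hq : Real.sqrt (ϑ (f s)) ^ 2 = ϑ (f s) := Real.sq_sqrt (by linarith [hϑ1 (f s)])
      rw [mul_pow c, hq]
      have := mul_le_mul_of_nonneg_left (hlow _ h) (sq_nonneg c)
      have e : c ^ 2 * (α ^ 2 / 2 * f s ^ 2) = 4 * f s ^ 2 := by
        linear_combination (f s ^ 2 / 2) * hcsq
      nlinarith
  have hg : ∀ s, HasDerivAt (fun s => c * s - f s ^ 2)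
      (c - 2 * f s * (Real.sqrt (ϑ (f s)))⁻¹) s := by
    intro s
    have h := ((hasDerivAt_id s).const_mul c).sub ((hf' s).pow 2)
    refine h.congr_deriv ?_
    simp
  have hmono : Monotone (fun s => c * s - f s ^ 2) :=
    monotone_of_deriv_nonneg (fun s => (hg s).differentiableAt) (fun s => by
      rw [(hg s).deriv]
      linarith [hder s])
  have hmain : ∀ s, 0 ≤ s → |f s| ≤ Real.sqrt (c * s) := by
    intro s hs
    have h := hmono hs
    simp only [hf0] at h
    apply Real.abs_le_sqrt
    linarith
  have hrw : (8 / α ^ 2) ^ ((1:ℝ)/4) = Real.sqrt c := by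
    rw [hc, Real.sqrt_eq_rpow, Real.sqrt_eq_rpow, ← Real.rpow_mul (by positivity)]
    norm_num
  intro s
  rw [hrw, ← Real.sqrt_eq_rpow, ← Real.sqrt_mul hc0]
  rcases le_total 0 s with h | h
  · rw [abs_of_nonneg h]
    exact hmain s h
  · rw [abs_of_nonpos h]
    have := hmain (-s) (by linarith)
    rwa [hfodd, abs_neg] at this
end

section
/- For all s ∈ ℝ with |s| > 1, one has |f(s)| ≥ f(1) · |s|^{1/2}. -/
/-- For `|s| > 1` one has `|f(s)| ≥ f(1)·|s|^{1/2}`. -/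
theorem f_lower_bound_at_infinity (ϑ f : ℝ → ℝ)
    (hϑC1 : ContDiff ℝ 1 ϑ) (hϑeven : ∀ s, ϑ (-s) = ϑ s) (hϑ1 : ∀ s, 1 ≤ ϑ s)
    (hϑ1' : StrictAntiOn ϑ (Set.Iio 0)) (hϑ1'' : StrictMonoOn ϑ (Set.Ioi 0))
    (hϑ2 : MonotoneOn (fun s => ϑ s / s ^ 2) (Set.Iio 0))
    (hϑ2' : AntitoneOn (fun s => ϑ s / s ^ 2) (Set.Ioi 0))
    (hfodd : ∀ s, f (-s) = - f s) (hfC2 : ContDiff ℝ 2 f) (hf0 : f 0 = 0)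
    (hf' : ∀ s, HasDerivAt f ((Real.sqrt (ϑ (f s)))⁻¹) s) :
    ∀ s : ℝ, 1 < |s| → f 1 * |s| ^ ((1:ℝ)/2) ≤ |f s| := by
  have hpos : ∀ t, 0 < Real.sqrt (ϑ t) := fun t =>
    Real.sqrt_pos.mpr (lt_of_lt_of_le one_pos (hϑ1 t))
  have hmono : StrictMono f := strictMono_of_hasDerivAt_pos hf' (fun s => inv_pos.mpr (hpos _))
  have hfpos : ∀ s, 0 < s → 0 < f s := fun s hs => by
    have := hmono hs
    rwa [hf0] at this
  have hd : ∀ s, HasDerivAt (fun s => f s ^ 2) (2 * (f s * (Real.sqrt (ϑ (f s)))⁻¹)) s := by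
    intro s
    have := (hf' s).pow 2
    refine HasDerivAt.congr_deriv this ?_
    simp
    ring
  have hconv : ConvexOn ℝ (Set.Ici 0) (fun s => f s ^ 2) := by
    refine MonotoneOn.convexOn_of_deriv (convex_Ici 0)
      (fun s _ => (hd s).continuousAt.continuousWithinAt)
      (fun s _ => (hd s).differentiableAt.differentiableWithinAt) ?_
    rw [interior_Ici]
    intro x hx y hy hxy
    rw [(hd x).deriv, (hd y).deriv]
    have ha := hfpos x hx
    have hb := hfpos y hy
    have hab : f x ≤ f y := hmono.monotone hxy
    have h := hϑ2' (Set.mem_Ioi.mpr ha) (Set.mem_Ioi.mpr hb) hab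
    simp only at h
    rw [div_le_div_iff₀ (by positivity) (by positivity)] at h
    have key : f x * Real.sqrt (ϑ (f y)) ≤ f y * Real.sqrt (ϑ (f x)) := by
      have h1 := Real.sq_sqrt (zero_le_one.trans (hϑ1 (f x)))
      have h2 := Real.sq_sqrt (zero_le_one.trans (hϑ1 (f y)))
      have := hpos (f x)
      refine (abs_le_of_sq_le_sq' ?_ (by positivity)).2
      rw [mul_pow, mul_pow, h1, h2]
      linarith
    have : f x * (Real.sqrt (ϑ (f x)))⁻¹ ≤ f y * (Real.sqrt (ϑ (f y)))⁻¹ := by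
      rw [← div_eq_mul_inv, ← div_eq_mul_inv, div_le_div_iff₀ (hpos _) (hpos _)]
      exact key
    linarith
  have main : ∀ s : ℝ, 1 < s → f 1 * s ^ ((1:ℝ)/2) ≤ f s := by
    intro s hs
    have hs0 : 0 < s := by linarith
    have h := hconv.2 (Set.mem_Ici.mpr hs0.le) (Set.mem_Ici.mpr (le_refl (0:ℝ)))
      (show 0 ≤ 1 / s by positivity)
      (show 0 ≤ 1 - 1 / s by rw [sub_nonneg, div_le_one hs0]; exact hs.le) (by ring)
    simp only [smul_eq_mul, mul_zero, add_zero, hf0] at h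
    rw [one_div_mul_cancel hs0.ne'] at h
    have h3 : f 1 ^ 2 * s ≤ f s ^ 2 := by
      have := mul_le_mul_of_nonneg_right h hs0.le
      have e : (1 / s * f s ^ 2 + (1 - 1 / s) * 0 ^ 2) * s = f s ^ 2 := by
        field_simp
        ring
      linarith
    rw [← Real.sqrt_eq_rpow]
    refine abs_le_of_sq_le_sq' ?_ (hfpos s hs0).le |>.2
    rw [mul_pow, Real.sq_sqrt hs0.le]
    exact h3
  intro s hs
  have habs : |f s| = f |s| := by
    rcases le_total 0 s with h | h
    · rw [abs_of_nonneg h, abs_of_nonneg]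
      rw [← hf0]
      exact hmono.monotone h
    · rw [abs_of_nonpos h, hfodd, abs_of_nonpos]
      rw [← hf0]
      exact hmono.monotone h
  rw [habs]
  exact main _ hs
end

section
/- For every p with 2 ≤ p ≤ 4 and every s ∈ ℝ, one has |f(s)|^p ≤ [1 + (8/α²)^{p/4}] · s². -/
/-- For `2 ≤ p ≤ 4` and all `s`, `|f(s)|^p ≤ [1 + (8/α²)^{p/4}]·s²`. -/
theorem f_pow_p_bound (ϑ f : ℝ → ℝ) (α : ℝ) (hα : 0 < α)
    (hϑC1 : ContDiff ℝ 1 ϑ) (hϑeven : ∀ s, ϑ (-s) = ϑ s) (hϑ1 : ∀ s, 1 ≤ ϑ s)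
    (hϑ1' : StrictAntiOn ϑ (Set.Iio 0)) (hϑ1'' : StrictMonoOn ϑ (Set.Ioi 0))
    (hϑ2 : MonotoneOn (fun s => ϑ s / s ^ 2) (Set.Iio 0))
    (hϑ2' : AntitoneOn (fun s => ϑ s / s ^ 2) (Set.Ioi 0))
    (hϑ3 : Filter.Tendsto (fun s => ϑ s / s ^ 2) (Filter.cocompact ℝ) (nhds (α ^ 2 / 2)))
    (hfodd : ∀ s, f (-s) = - f s) (hfC2 : ContDiff ℝ 2 f) (hf0 : f 0 = 0)
    (hf' : ∀ s, HasDerivAt f ((Real.sqrt (ϑ (f s)))⁻¹) s) :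
    ∀ p : ℝ, 2 ≤ p → p ≤ 4 →
      ∀ s : ℝ, |f s| ^ p ≤ (1 + (8 / α ^ 2) ^ (p / 4)) * s ^ 2 := by 
  have hlow : ∀ t, 0 < t → α ^ 2 / 2 * t ^ 2 ≤ ϑ t := by
    intro t ht
    have h3 : Filter.Tendsto (fun s => ϑ s / s ^ 2) Filter.atTop (nhds (α ^ 2 / 2)) :=
      hϑ3.mono_left atTop_le_cocompact
    have : α ^ 2 / 2 ≤ ϑ t / t ^ 2 := by
      refine le_of_tendsto h3 ?_
      filter_upwards [Filter.eventually_ge_atTop t] with u hu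
      exact hϑ2' (Set.mem_Ioi.2 ht) (Set.mem_Ioi.2 (lt_of_lt_of_le ht hu)) hu
    rwa [le_div_iff₀ (by positivity)] at this
  set K : ℝ := 8 / α ^ 2 with hK
  have hKpos : 0 < K := by positivity
  have hspos : ∀ s, 0 < Real.sqrt (ϑ (f s)) := fun s =>
    Real.sqrt_pos.2 (lt_of_lt_of_le one_pos (hϑ1 _))
  have hmono : Monotone f := monotone_of_hasDerivAt_nonneg (f' := fun s => (Real.sqrt (ϑ (f s)))⁻¹)
    hf' (fun s => (inv_pos.2 (hspos s)).le)
  have hanti1 : Antitone (fun s => f s - s) :=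
    antitone_of_hasDerivAt_nonpos (fun s => (hf' s).sub (hasDerivAt_id s)) (fun s => by
      have : 1 ≤ Real.sqrt (ϑ (f s)) := Real.one_le_sqrt.2 (hϑ1 _)
      have := inv_le_one_of_one_le₀ this
      simpa using this)
  have hanti2 : Antitone (fun s => f s ^ 2 - Real.sqrt K * s) :=
    antitone_of_hasDerivAt_nonpos
      (fun s => ((hf' s).pow 2).sub ((hasDerivAt_id s).const_mul (Real.sqrt K))) (fun s => by
      have h1 : 2 * f s ≤ Real.sqrt K * Real.sqrt (ϑ (f s)) := by
        rcases le_or_gt (f s) 0 with h | h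
        · have : 0 ≤ Real.sqrt K * Real.sqrt (ϑ (f s)) := by positivity
          linarith
        · rw [← Real.sqrt_mul hKpos.le]
          apply Real.le_sqrt_of_sq_le
          have := mul_le_mul_of_nonneg_left (hlow _ h) hKpos.le
          have e : K * (α ^ 2 / 2 * f s ^ 2) = (2 * f s) ^ 2 := by
            rw [hK]; field_simp; ring
          linarith
      have h2 : 2 * f s * (Real.sqrt (ϑ (f s)))⁻¹ ≤ Real.sqrt K := by
        rw [← div_eq_mul_inv, div_le_iff₀ (hspos s)]; exact h1
      simpa using h2)
  intro p hp2 hp4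
  have key : ∀ s, 0 < s → |f s| ^ p ≤ (1 + K ^ (p / 4)) * s ^ 2 := by
    intro s hs
    have hf_nn : 0 ≤ f s := hf0 ▸ hmono hs.le
    have hb1 : f s ≤ s := by
      have := hanti1 hs.le
      simp [hf0] at this
      exact this
    have hb2 : f s ^ 2 ≤ Real.sqrt K * s := by
      have := hanti2 hs.le
      simp [hf0] at this
      exact this
    rw [abs_of_nonneg hf_nn]
    have e1 : f s ^ p = (f s ^ 2) ^ (2 - p / 2) * ((f s ^ 2) ^ 2) ^ (p / 2 - 1) := by
      rw [← Real.rpow_natCast, ← Real.rpow_natCast, ← Real.rpow_mul hf_nn, ← Real.rpow_mul hf_nn,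
        ← Real.rpow_mul hf_nn, ← Real.rpow_add_of_nonneg hf_nn]
      · congr 1; push_cast; ring
      · push_cast; linarith
      · push_cast; linarith
    have e2 : (f s ^ 2) ^ 2 ≤ K * s ^ 2 := by
      calc (f s ^ 2) ^ 2 ≤ (Real.sqrt K * s) ^ 2 := by gcongr
        _ = K * s ^ 2 := by rw [mul_pow, Real.sq_sqrt hKpos.le]
    have e3 : K ^ (p / 2 - 1) ≤ 1 + K ^ (p / 4) := by
      rcases le_total K 1 with h | h
      · have h1 := Real.rpow_le_one hKpos.le h (show 0 ≤ p / 2 - 1 by linarith)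
        have h2 := Real.rpow_nonneg hKpos.le (p / 4)
        linarith
      · have := Real.rpow_le_rpow_of_exponent_le h (show p / 2 - 1 ≤ p / 4 by linarith)
        linarith
    have hs2 : 0 < s ^ 2 := by positivity
    calc f s ^ p = (f s ^ 2) ^ (2 - p / 2) * ((f s ^ 2) ^ 2) ^ (p / 2 - 1) := e1
      _ ≤ (s ^ 2) ^ (2 - p / 2) * (K * s ^ 2) ^ (p / 2 - 1) := by
        apply mul_le_mul
        · exact Real.rpow_le_rpow (by positivity) (by gcongr) (by linarith)
        · exact Real.rpow_le_rpow (by positivity) e2 (by linarith)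
        · positivity
        · positivity
      _ = K ^ (p / 2 - 1) * s ^ 2 := by
        rw [Real.mul_rpow hKpos.le hs2.le, mul_left_comm, ← Real.rpow_add hs2]
        congr 1
        rw [show 2 - p / 2 + (p / 2 - 1) = 1 by ring, Real.rpow_one]
      _ ≤ _ := by gcongr
  intro s
  rcases lt_trichotomy s 0 with h | h | h
  · have := key (-s) (by linarith)
    rwa [hfodd, abs_neg, neg_sq] at this
  · subst h
    rw [hf0, abs_zero, Real.zero_rpow (by linarith)]
    simp
  · exact key s h
end

section
/- Let Ω ⊂ ℝᴺ be a bounded measurable set with the Lebesgue measure, and let Y be a finite-dimensional subspace of L²(Ω) with unit sphere S = {u ∈ Y : ‖u‖_{L²} = 1}. Then there exist constants β > 0 and α > 0 such that for every u ∈ S and every s > α, the Lebesgue measure of [1 < |s u|] := {x ∈ Ω : 1 < s|u(x)|} satisfies |[1 < |s u|]| ≥ β. -/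
open MeasureTheory Topology Filter in
lemma local_bound {X : Type*} [MeasurableSpace X] (μ : Measure X) [IsFiniteMeasure μ]
    (u₀ : Lp ℝ 2 μ) (h0 : u₀ ≠ 0) :
    ∃ β > (0:ℝ), ∃ α > (0:ℝ), ∀ᶠ u : Lp ℝ 2 μ in 𝓝 u₀, ∀ s : ℝ, α < s →
      ENNReal.ofReal β ≤ μ {x | 1 < s * |u x|} := by
  have h1 : ∃ n : ℕ, μ {x | 1 / ((n:ℝ) + 1) < |u₀ x|} ≠ 0 := by
    by_contra! h
    apply h0
    rw [Lp.eq_zero_iff_ae_eq_zero]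
    have h2 : ∀ᵐ x ∂μ, ∀ n : ℕ, ¬ (1 / ((n:ℝ) + 1) < |u₀ x|) := by
      rw [ae_all_iff]
      intro n
      rw [ae_iff]
      simpa using h n
    filter_upwards [h2] with x hx
    by_contra hne
    obtain ⟨n, hn⟩ := exists_nat_one_div_lt (abs_pos.mpr hne)
    exact hx n hn
  obtain ⟨n, hn⟩ := h1
  set δ : ℝ := 1 / ((n:ℝ) + 1) with hδ
  have hδ0 : 0 < δ := by positivity
  set m := μ {x | δ < |u₀ x|} with hm
  have hmt : m ≠ ⊤ := measure_ne_top _ _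
  have hT : TendstoInMeasure μ (fun u : Lp ℝ 2 μ => (u : X → ℝ)) (𝓝 u₀) u₀ :=
    tendstoInMeasure_of_tendsto_Lp tendsto_id
  rw [tendstoInMeasure_iff_norm] at hT
  have h3 := (hT (δ / 2) (by positivity)).eventually_lt_const
    (u := m / 2) (ENNReal.half_pos hn)
  refine ⟨(m / 2).toReal, ENNReal.toReal_pos (ENNReal.half_pos hn).ne'
    (ENNReal.div_ne_top hmt (by simp)), 2 / δ, by positivity, ?_⟩
  filter_upwards [h3] with u hu s hs
  rw [ENNReal.ofReal_toReal (ENNReal.div_ne_top hmt (by simp))]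
  by_contra! hlt
  have hsub : {x | δ < |u₀ x|} ⊆ {x | 1 < s * |u x|} ∪ {x | δ / 2 ≤ ‖u x - u₀ x‖} := by
    intro x hx
    by_contra hc
    simp only [Set.mem_union, Set.mem_setOf_eq, not_or, not_lt, not_le, Real.norm_eq_abs] at hc hx
    obtain ⟨ha, hb⟩ := hc
    have h4 : |u₀ x| ≤ |u x| + |u x - u₀ x| := by
      have := abs_sub (u x) (u x - u₀ x)
      simpa using this
    have h5 : δ / 2 < |u x| := by linarith
    have h6 : 2 / δ * (δ / 2) = 1 := by field_simp
    have h7 : 2 / δ * (δ / 2) < s * |u x| := by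
      apply mul_lt_mul'' hs h5 <;> positivity
    linarith
  have := (measure_mono hsub).trans (measure_union_le (μ := μ) _ _)
  have h8 := ENNReal.add_lt_add hlt hu
  rw [ENNReal.add_halves] at h8
  exact absurd this (not_le.mpr h8)


open MeasureTheory in
/-- Lemma 2.3(i), first part: on the unit sphere of a finite-dimensional subspace
`Y ⊆ L²(Ω)`, the measure of `[1 < |su|]` is uniformly bounded below for large `s`. -/
theorem measure_superlevel_lower_bound (N : ℕ) (Ω : Set (Fin N → ℝ))
    (hΩm : MeasurableSet Ω) (hΩb : Bornology.IsBounded Ω)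
    (Y : Submodule ℝ (Lp ℝ 2 (volume.restrict Ω)))
    (hY : FiniteDimensional ℝ Y) :
    ∃ β > (0:ℝ), ∃ α > (0:ℝ), ∀ u ∈ Y, ‖u‖ = 1 → ∀ s : ℝ, α < s →
      ENNReal.ofReal β ≤ volume.restrict Ω {x | 1 < s * |u x|} := by
  have : IsFiniteMeasure (volume.restrict Ω) :=
    ⟨by simpa using hΩb.measure_lt_top⟩
  have hK : IsCompact (Metric.sphere (0 : Y) 1) := by
    have := FiniteDimensional.proper ℝ Y
    exact isCompact_sphere _ _
  have key : ∃ β > (0:ℝ), ∃ α > (0:ℝ), ∀ u ∈ Metric.sphere (0 : Y) 1, ∀ s : ℝ, α < s →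
      ENNReal.ofReal β ≤ volume.restrict Ω {x | 1 < s * |(u : Lp ℝ 2 (volume.restrict Ω)) x|} := by
    refine hK.induction_on (p := fun S => ∃ β > (0:ℝ), ∃ α > (0:ℝ), ∀ u ∈ S, ∀ s : ℝ, α < s →
      ENNReal.ofReal β ≤ volume.restrict Ω
        {x | 1 < s * |(u : Lp ℝ 2 (volume.restrict Ω)) x|}) ?_ ?_ ?_ ?_
    · exact ⟨1, one_pos, 1, one_pos, by simp⟩
    · rintro S T hST ⟨β, hβ, α, hα, h⟩
      exact ⟨β, hβ, α, hα, fun u hu => h u (hST hu)⟩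
    · rintro S T ⟨β, hβ, α, hα, h⟩ ⟨β', hβ', α', hα', h'⟩
      refine ⟨min β β', lt_min hβ hβ', max α α', lt_max_of_lt_left hα, ?_⟩
      rintro u (hu | hu) s hs
      · exact (ENNReal.ofReal_le_ofReal (min_le_left _ _)).trans
          (h u hu s ((le_max_left _ _).trans_lt hs))
      · exact (ENNReal.ofReal_le_ofReal (min_le_right _ _)).trans
          (h' u hu s ((le_max_right _ _).trans_lt hs))
    · intro u hu
      have hu0 : (u : Lp ℝ 2 (volume.restrict Ω)) ≠ 0 := by
        intro h
        have : u = 0 := Subtype.ext h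
        simp [this] at hu
      obtain ⟨β, hβ, α, hα, h⟩ := local_bound (volume.restrict Ω) _ hu0
      have h2 := (continuous_subtype_val.tendsto u).eventually h
      exact ⟨_, mem_nhdsWithin_of_mem_nhds h2, β, hβ, α, hα, fun v hv => hv⟩
  obtain ⟨β, hβ, α, hα, h⟩ := key
  refine ⟨β, hβ, α, hα, fun u hu hn => h ⟨u, hu⟩ ?_⟩
  simpa using hn
end

section
/- The function r₁(s) = f(s)·ϑ(f(s))^{1/2} − s satisfies r₁(0) = 0 and r₁'(s) = ϑ'(f(s))·f(s)/(2ϑ(f(s))) ≥ 0 for all s > 0, and the function r₂(s) = 2s − f(s)·ϑ(f(s))^{1/2} satisfies r₂(0) = 0 and r₂'(s) = 1 − ϑ'(f(s))·f(s)/(2ϑ(f(s))) ≥ 0 for all s > 0. -/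
/-- The auxiliary functions `r₁(s) = f(s)ϑ(f(s))^{1/2} - s` and
`r₂(s) = 2s - f(s)ϑ(f(s))^{1/2}` vanish at `0` and have the indicated
nonnegative derivatives for `s > 0`. -/
theorem aux_functions_derivatives (ϑ f : ℝ → ℝ)
    (hϑC1 : ContDiff ℝ 1 ϑ) (hϑeven : ∀ s, ϑ (-s) = ϑ s) (hϑ1 : ∀ s, 1 ≤ ϑ s)
    (hϑ1' : StrictAntiOn ϑ (Set.Iio 0)) (hϑ1'' : StrictMonoOn ϑ (Set.Ioi 0))
    (hϑ2 : MonotoneOn (fun s => ϑ s / s ^ 2) (Set.Iio 0))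
    (hϑ2' : AntitoneOn (fun s => ϑ s / s ^ 2) (Set.Ioi 0))
    (hfodd : ∀ s, f (-s) = - f s) (hfC2 : ContDiff ℝ 2 f) (hf0 : f 0 = 0)
    (hf' : ∀ s, HasDerivAt f ((Real.sqrt (ϑ (f s)))⁻¹) s) :
    (f 0 * Real.sqrt (ϑ (f 0)) - 0 = 0) ∧
    (∀ s : ℝ, 0 < s →
      HasDerivAt (fun t => f t * Real.sqrt (ϑ (f t)) - t)
        (deriv ϑ (f s) * f s / (2 * ϑ (f s))) s ∧
      0 ≤ deriv ϑ (f s) * f s / (2 * ϑ (f s))) ∧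
    (2 * (0:ℝ) - f 0 * Real.sqrt (ϑ (f 0)) = 0) ∧
    (∀ s : ℝ, 0 < s →
      HasDerivAt (fun t => 2 * t - f t * Real.sqrt (ϑ (f t)))
        (1 - deriv ϑ (f s) * f s / (2 * ϑ (f s))) s ∧
      0 ≤ 1 - deriv ϑ (f s) * f s / (2 * ϑ (f s))) := by
  have hd : ∀ x, HasDerivAt ϑ (deriv ϑ x) x := fun x =>
    ((hϑC1.differentiable (by norm_num)) x).hasDerivAt
  have hpos : ∀ x, 0 < ϑ x := fun x => lt_of_lt_of_le one_pos (hϑ1 x)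
  have hmono : StrictMono f := by
    apply strictMono_of_deriv_pos
    intro x
    rw [(hf' x).deriv]
    exact inv_pos.mpr (Real.sqrt_pos.mpr (hpos _))
  have hfpos : ∀ s, 0 < s → 0 < f s := fun s hs => by
    have h := hmono hs
    rwa [hf0] at h
  have hD : ∀ s, HasDerivAt (fun t => f t * Real.sqrt (ϑ (f t)))
      (1 + deriv ϑ (f s) * f s / (2 * ϑ (f s))) s := by
    intro s
    have h1 : HasDerivAt (fun t => ϑ (f t)) (deriv ϑ (f s) * (Real.sqrt (ϑ (f s)))⁻¹) s :=
      (hd (f s)).comp s (hf' s)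
    have h2 := (hf' s).mul (h1.sqrt (hpos _).ne')
    have hq : 0 < Real.sqrt (ϑ (f s)) := Real.sqrt_pos.mpr (hpos _)
    have hsq : Real.sqrt (ϑ (f s)) ^ 2 = ϑ (f s) := Real.sq_sqrt (hpos _).le
    refine h2.congr_deriv ?_
    have e : deriv ϑ (f s) * f s / (2 * ϑ (f s))
        = deriv ϑ (f s) * f s / (2 * Real.sqrt (ϑ (f s)) ^ 2) := by rw [hsq]
    rw [e]
    field_simp
  have hnn : ∀ x, 0 < x → 0 ≤ deriv ϑ x := by
    intro x hx
    have h := hϑ1''.monotoneOn.derivWithin_nonneg (x := x)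
    rwa [derivWithin_of_isOpen isOpen_Ioi hx] at h
  have hle : ∀ x, 0 < x → deriv ϑ x * x ≤ 2 * ϑ x := by
    intro x hx
    have h := hϑ2'.derivWithin_nonpos (x := x)
    rw [derivWithin_of_isOpen isOpen_Ioi hx] at h
    have h3 : HasDerivAt (fun s => ϑ s / s ^ 2) _ x :=
      (hd x).fun_div (hasDerivAt_pow 2 x) (by positivity)
    rw [h3.deriv, div_le_iff₀ (by positivity)] at h
    norm_num at h
    by_contra hc
    push Not at hc
    nlinarith [mul_lt_mul_of_pos_right hc hx]
  refine ⟨by simp [hf0], fun s hs => ⟨?_, ?_⟩, by simp [hf0], fun s hs => ⟨?_, ?_⟩⟩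
  · exact ((hD s).sub (hasDerivAt_id s)).congr_deriv (by ring)
  · exact div_nonneg (mul_nonneg (hnn _ (hfpos s hs)) (hfpos s hs).le)
      (mul_pos two_pos (hpos _)).le
  · exact (((hasDerivAt_id s).const_mul 2).sub (hD s)).congr_deriv (by ring)
  · rw [sub_nonneg, div_le_one (mul_pos two_pos (hpos _))]
    exact hle _ (hfpos s hs)
end
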